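/- Let G be a connected simple graph on Fin N and let θ : Fin N → ℝ be a completely degenerate equilibrium of the identical Kuramoto system on G. Then G has a closed walk p that is Eulerian (uses every edge of G exactly once) such that at each step of p the phase increases by π/2 modulo 2π: for every index i < length of p, θ(v_{i+1}) ≡ θ(v_i) + π/2 (mod 2π), where v_i denotes the i-th vertex of p. In particular, for all i, j ≤ length of p, if v_i = v_j then 4 divides i − j. -/

import Mathlib

open Real

open Classical in
/-- Adjacency indicator: `1` if `j` and `k` are adjacent in `G`, `0` otherwise. -/
noncomputable def adjInd {V : Type*} (G : SimpleGraph V) (j k : V) : ℝ :=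
  if G.Adj j k then 1 else 0

/-- A completely degenerate equilibrium of the identical Kuramoto system on `G`. -/
def IsCDE {V : Type*} [Fintype V] (G : SimpleGraph V) (θ : V → ℝ) : Prop :=
  (∀ k, ∑ j, adjInd G j k * Real.sin (θ j - θ k) = 0) ∧
  (∀ j k, G.Adj j k → Real.cos (θ j - θ k) = 0)

open SimpleGraph in
theorem aux_count {V : Type*} [DecidableEq V] {G : SimpleGraph V} (x : V) :
    ∀ {u v : V} (p : G.Walk u v),
    p.darts.countP (fun d => d.fst = x) + (if x = v then 1 else 0) =
    p.darts.countP (fun d => d.snd = x) + (if x = u then 1 else 0) := by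
  intro u v p
  induction p with
  | nil => simp
  | @cons u w v h p ih =>
    simp only [Walk.darts_cons, List.countP_cons, decide_eq_true_eq]
    simp only [eq_comm (a := x)] at ih ⊢
    omega

open SimpleGraph in
theorem aux_step {V : Type*} {G : SimpleGraph V} (P : V → V → Prop) :
    ∀ {u v : V} (p : G.Walk u v), (∀ d ∈ p.darts, P d.fst d.snd) →
    ∀ i, i < p.length → P (p.getVert i) (p.getVert (i + 1)) := by
  intro u v p
  induction p with
  | nil => simp
  | @cons u w v h p ih =>
    intro hd i hi
    simp only [Walk.darts_cons, List.mem_cons, forall_eq_or_imp] at hd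
    cases i with
    | zero => simpa using hd.1
    | succ i =>
      simp only [Walk.getVert_cons_succ]
      exact ih hd.2 i (by simpa using hi)

open SimpleGraph in
/-- Directed Euler theorem for an orientation. -/
theorem aux_euler {V : Type*} [Fintype V] [DecidableEq V] (G : SimpleGraph V)
    (hG : G.Connected) (R : V → V → Prop) [DecidableRel R]
    (hR : ∀ u v, G.Adj u v → R u v ∨ R v u)
    (hRa : ∀ u v, R u v → G.Adj u v)
    (has : ∀ u v, R u v → ¬ R v u)
    (hb : ∀ v, (Finset.univ.filter (fun j => R v j)).card =
      (Finset.univ.filter (fun j => R j v)).card) :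
    ∃ (v : V) (p : G.Walk v v), p.IsEulerian ∧ ∀ d ∈ p.darts, R d.fst d.snd := by
  classical
  let S : Set ℕ := {n | ∃ (u v : V) (p : G.Walk u v), p.IsTrail ∧
    (∀ d ∈ p.darts, R d.fst d.snd) ∧ p.length = n}
  have hbdd : BddAbove S := by
    refine ⟨G.edgeFinset.card, ?_⟩
    rintro n ⟨u, v, p, hp, -, rfl⟩
    exact hp.length_le_card_edgeFinset
  have hne : S.Nonempty := by
    obtain ⟨v⟩ := hG.nonempty
    exact ⟨0, v, v, Walk.nil, by simp, by simp, by simp⟩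
  obtain ⟨u, v, p, hp, hd, hlen⟩ := Nat.sSup_mem hne hbdd
  have hmax : ∀ {a b : V} (q : G.Walk a b), q.IsTrail → (∀ d ∈ q.darts, R d.fst d.snd) →
      q.length ≤ p.length := by
    intro a b q hq hdq
    rw [hlen]
    exact le_csSup hbdd ⟨a, b, q, hq, hdq, rfl⟩
  -- maximal trails cannot be extended
  have hend : ∀ {a b : V} (q : G.Walk a b), q.IsTrail → (∀ d ∈ q.darts, R d.fst d.snd) →
      q.length = p.length → ∀ c, R b c → s(b, c) ∈ q.edges := by
    intro a b q hq hdq hl c hc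
    by_contra hnot
    have h1 := hmax (q.concat (hRa _ _ hc)) (by
      rw [Walk.isTrail_def, Walk.edges_concat, List.concat_eq_append, List.nodup_append]
      refine ⟨hq.edges_nodup, by simp, ?_⟩
      rintro e he f hf rfl
      simp at hf
      exact hnot (hf ▸ he)) (by
      intro d hdm
      rw [Walk.darts_concat, List.concat_eq_append, List.mem_append] at hdm
      rcases hdm with h | h
      · exact hdq d h
      · simp at h; subst h; exact hc)
    rw [Walk.length_concat] at h1
    omega
  have hstart : ∀ {a b : V} (q : G.Walk a b), q.IsTrail → (∀ d ∈ q.darts, R d.fst d.snd) →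
      q.length = p.length → ∀ c, R c a → s(c, a) ∈ q.edges := by
    intro a b q hq hdq hl c hc
    by_contra hnot
    have h1 := hmax (Walk.cons (hRa _ _ hc) q) ((Walk.isTrail_cons _ _).2 ⟨hq, hnot⟩) (by
      intro d hdm
      rw [Walk.darts_cons, List.mem_cons] at hdm
      rcases hdm with h | h
      · subst h; exact hc
      · exact hdq d h)
    rw [Walk.length_cons] at h1
    omega
  have hnd : p.darts.Nodup := by
    have := hp.edges_nodup
    exact List.Nodup.of_map _ this
  have huv : u = v := by
    by_contra hne
    have hc := aux_count v p
    rw [if_pos rfl, if_neg (Ne.symm hne)] at hc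
    have h1 : (Finset.univ.filter (fun j => R v j)).card ≤
        p.darts.countP (fun d => d.fst = v) := by
      rw [List.countP_eq_length_filter, ← List.toFinset_card_of_nodup (hnd.filter _)]
      refine le_trans (Finset.card_le_card ?_)
        (Finset.card_image_le (f := fun d : G.Dart => d.snd))
      intro j hj
      have hj' : R v j := by simpa using hj
      have he := hend p hp hd rfl j hj'
      rw [Walk.edges, List.mem_map] at he
      obtain ⟨d, hdm, hde⟩ := he
      rw [dart_edge_eq_mk'_iff'] at hde
      rcases hde with ⟨h1, h2⟩ | ⟨h1, h2⟩
      · simp only [Finset.mem_image, List.mem_toFinset, List.mem_filter, decide_eq_true_eq]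
        exact ⟨d, ⟨hdm, h1⟩, h2⟩
      · have := hd d hdm
        rw [h1, h2] at this
        exact absurd this (has _ _ hj')
    have h2 : p.darts.countP (fun d => d.snd = v) ≤
        (Finset.univ.filter (fun j => R j v)).card := by
      rw [List.countP_eq_length_filter, ← List.toFinset_card_of_nodup (hnd.filter _)]
      refine Finset.card_le_card_of_injOn (fun d : G.Dart => d.fst) ?_ ?_
      · intro d hdm
        simp only [Finset.mem_coe, List.mem_toFinset, List.mem_filter, decide_eq_true_eq] at hdm
        have := hd d hdm.1
        rw [hdm.2] at this
        simpa using this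
      · intro d hdm e hem h
        simp only [Finset.mem_coe, List.mem_toFinset, List.mem_filter, decide_eq_true_eq]
          at hdm hem
        exact Dart.ext _ _ (Prod.ext h (hdm.2.trans hem.2.symm))
    have := hb v
    omega
  subst huv
  have hinc : ∀ x ∈ p.support, ∀ y, G.Adj x y → s(x, y) ∈ p.edges := by
    intro x hx y hxy
    have hrot : (p.rotate x hx).IsTrail := hp.rotate hx
    have hdr : ∀ d ∈ (p.rotate x hx).darts, R d.fst d.snd := fun d hdm =>
      hd d ((p.rotate_darts x hx).mem_iff.1 hdm)
    have hl : (p.rotate x hx).length = p.length := by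
      rw [← Walk.length_darts, ← Walk.length_darts]
      exact (p.rotate_darts x hx).perm.length_eq
    rw [← (p.rotate_edges x hx).mem_iff]
    rcases hR x y hxy with h | h
    · exact hend _ hrot hdr hl y h
    · rw [Sym2.eq_swap]
      exact hstart _ hrot hdr hl y h
  have hsup : ∀ y, y ∈ p.support := by
    have key : ∀ {a b : V} (q : G.Walk a b), a ∈ p.support → b ∈ p.support := by
      intro a b q
      induction q with
      | nil => exact id
      | cons h q ih => exact fun ha => ih (p.snd_mem_support_of_mem_edges (hinc _ ha _ h))
    intro y
    obtain ⟨q⟩ := hG.preconnected u y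
    exact key q p.start_mem_support
  refine ⟨u, p, hp.isEulerian_of_forall_mem ?_, hd⟩
  intro e he
  induction e using Sym2.ind with
  | _ x y => exact hinc x (hsup x) y he


/-- a completely degenerate equilibrium on a connected graph (with at least one
edge) yields an Eulerian circuit along which the phase increases by `π/2 (mod 2π)` at each
step; in particular the number of steps between any two visits at the same vertex is a
multiple of four. -/
theorem stmt8 {N : ℕ} (G : SimpleGraph (Fin N)) (hG : G.Connected)
    (hE : G.edgeSet.Nonempty) (θ : Fin N → ℝ) (hθ : IsCDE G θ) :
    ∃ (v : Fin N) (p : G.Walk v v), p.IsEulerian ∧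
      (∀ i : ℕ, i < p.length →
        ∃ m : ℤ, θ (p.getVert (i + 1)) = θ (p.getVert i) + π / 2 + 2 * π * m) ∧
      ∀ i j : ℕ, i ≤ p.length → j ≤ p.length →
        p.getVert i = p.getVert j → (4 : ℤ) ∣ (i : ℤ) - (j : ℤ) := by
  classical
  obtain ⟨hs, hc⟩ := hθ
  have hneg : ∀ j k, Real.sin (θ k - θ j) = - Real.sin (θ j - θ k) := fun j k => by
    rw [← Real.sin_neg, neg_sub]
  have hpm : ∀ j k, G.Adj j k → Real.sin (θ j - θ k) = 1 ∨ Real.sin (θ j - θ k) = -1 := by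
    intro j k h
    have h1 := Real.sin_sq_add_cos_sq (θ j - θ k)
    rw [hc j k h] at h1
    exact mul_self_eq_one_iff.1 (by nlinarith)
  obtain ⟨v, p, hp, hd⟩ := aux_euler G hG
    (fun u v => G.Adj u v ∧ Real.sin (θ v - θ u) = 1)
    (by
      intro u v h
      rcases hpm u v h with h1 | h1
      · exact Or.inr ⟨h.symm, h1⟩
      · exact Or.inl ⟨h, by rw [hneg, h1]; norm_num⟩)
    (fun u v h => h.1)
    (by
      rintro u v ⟨-, h⟩ ⟨-, h'⟩
      rw [hneg, h] at h'
      norm_num at h')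
    (by
      intro k
      have h1 : ∀ j, adjInd G j k * Real.sin (θ j - θ k) =
          (if G.Adj k j ∧ Real.sin (θ j - θ k) = 1 then (1 : ℝ) else 0) -
          (if G.Adj j k ∧ Real.sin (θ k - θ j) = 1 then (1 : ℝ) else 0) := by
        intro j
        unfold adjInd
        by_cases h : G.Adj j k
        · rw [hneg j k]
          rcases hpm j k h with h1 | h1 <;> rw [h1] <;> norm_num [h, h.symm]
        · have h' : ¬ G.Adj k j := fun h' => h h'.symm
          simp [h, h']
      have h2 := hs k
      simp only [h1, Finset.sum_sub_distrib, Finset.sum_boole] at h2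
      exact_mod_cast sub_eq_zero.1 h2)
  have hstep : ∀ i : ℕ, i < p.length →
        ∃ m : ℤ, θ (p.getVert (i + 1)) = θ (p.getVert i) + π / 2 + 2 * π * m := by
    intro i hi
    obtain ⟨-, h⟩ := aux_step (fun u v => G.Adj u v ∧ Real.sin (θ v - θ u) = 1) p hd i hi
    obtain ⟨m, hm⟩ := Real.sin_eq_one_iff.1 h
    exact ⟨m, by linarith⟩
  have hall : ∀ i : ℕ, i ≤ p.length →
        ∃ m : ℤ, θ (p.getVert i) = θ v + i * (π / 2) + 2 * π * m := by
    intro i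
    induction i with
    | zero => exact fun _ => ⟨0, by simp⟩
    | succ i ih =>
      intro hi
      obtain ⟨m, hm⟩ := ih (by omega)
      obtain ⟨m', hm'⟩ := hstep i (by omega)
      exact ⟨m + m', by rw [hm', hm]; push_cast; ring⟩
  refine ⟨v, p, hp, hstep, ?_⟩
  intro i j hi hj hij
  obtain ⟨m, hm⟩ := hall i hi
  obtain ⟨n, hn⟩ := hall j hj
  rw [hij, hn] at hm
  refine ⟨n - m, ?_⟩
  have h : π * ((i : ℝ) - j) = π * (4 * (n - m)) := by linarith
  have := mul_left_cancel₀ Real.pi_ne_zero h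
  exact_mod_cast this
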